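/- Let n ∈ ℕ and σ ∈ {0,1}^n. For every t ∈ [0,1]^2, the counting functions of the symmetrized point set R_{n,σ}^{sym} and of the multiset ~R_{n,σ}^{sym} satisfy A([0,t), ~R_{n,σ}^{sym}) ≤ A([0,t), R_{n,σ}^{sym}) ≤ A([0,t), ~R_{n,σ}^{sym}) + 1. -/

import Mathlib

open MeasureTheory

/-- The real value of a binary digit. -/
noncomputable def bval (b : Bool) : ℝ := if b then 1 else 0

/-- The two-dimensional digit shifted Hammersley point set with `2^n` points,
indexed by the digit vectors `t : Fin n → Bool`.  The index `i : Fin n`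
corresponds to the digit `t_{i+1}` of the paper. -/
noncomputable def hammersleyShifted (n : ℕ) (σ : Fin n → Bool) (t : Fin n → Bool) : ℝ × ℝ :=
  (∑ i : Fin n, bval (t i) / 2 ^ (n - i.val),
   ∑ i : Fin n, bval (t i != σ i) / 2 ^ (i.val + 1))

/-- Number of points of the (indexed) point set `P` lying in `[0,t₁) × [0,t₂)`. -/
noncomputable def countIn {ι : Type*} [Fintype ι] (P : ι → ℝ × ℝ) (t : ℝ × ℝ) : ℕ :=
  (Finset.univ.filter
    (fun k => 0 ≤ (P k).1 ∧ (P k).1 < t.1 ∧ 0 ≤ (P k).2 ∧ (P k).2 < t.2)).card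

/-- The local discrepancy `D_N(P,t) = A_N([0,t),P)/N - t₁t₂` of an indexed point set. -/
noncomputable def localDisc {ι : Type*} [Fintype ι] (P : ι → ℝ × ℝ) (t : ℝ × ℝ) : ℝ :=
  (countIn P t : ℝ) / (Fintype.card ι) - t.1 * t.2

/-- The `L_p`-discrepancy of an indexed point set. -/
noncomputable def LpDisc (p : ℝ) {ι : Type*} [Fintype ι] (P : ι → ℝ × ℝ) : ℝ :=
  (∫ t in Set.Icc (0 : ℝ × ℝ) 1, |localDisc P t| ^ p) ^ (1 / p)

/-- One-dimensional `L∞`-normalized Haar function `h_{j,m}`, with `j ∈ ℤ`, `j = -1`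
giving the indicator of `[0,1)` and `j ≥ 0` the usual Haar function on `I_{j,m}`. -/
noncomputable def haar1 (j : ℤ) (m : ℕ) (x : ℝ) : ℝ :=
  if j = -1 then (if 0 ≤ x ∧ x < 1 then 1 else 0)
  else if (2 * m : ℝ) / 2 ^ (j.toNat + 1) ≤ x ∧ x < (2 * m + 1 : ℝ) / 2 ^ (j.toNat + 1) then 1
  else if (2 * m + 1 : ℝ) / 2 ^ (j.toNat + 1) ≤ x ∧ x < (2 * m + 2 : ℝ) / 2 ^ (j.toNat + 1) then -1
  else 0

/-- Two-dimensional (tensor product) Haar function. -/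
noncomputable def haar2 (j : ℤ × ℤ) (m : ℕ × ℕ) (x : ℝ × ℝ) : ℝ :=
  haar1 j.1 m.1 x.1 * haar1 j.2 m.2 x.2

/-- One-dimensional dyadic interval `I_{j,m}` (with `I_{-1,0} = [0,1)`). -/
noncomputable def dyadicI (j : ℤ) (m : ℕ) : Set ℝ :=
  if j = -1 then Set.Ico (0 : ℝ) 1
  else Set.Ico ((m : ℝ) / 2 ^ j.toNat) ((m + 1 : ℝ) / 2 ^ j.toNat)

/-- Haar coefficient `μ_{j,m} = ∫_{[0,1]²} D_N(P,t) h_{j,m}(t) dt` of the local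
discrepancy of an indexed point set. -/
noncomputable def haarCoeff {ι : Type*} [Fintype ι] (P : ι → ℝ × ℝ) (j : ℤ × ℤ) (m : ℕ × ℕ) : ℝ :=
  ∫ t in Set.Icc (0 : ℝ × ℝ) 1, localDisc P t * haar2 j m t

/-- Number of zero components of the shift `σ`. -/
noncomputable def zeroCount {n : ℕ} (σ : Fin n → Bool) : ℕ :=
  (Finset.univ.filter (fun j => σ j = false)).card

/-- The symmetrized digit shifted Hammersley point set `R_{n,σ} ∪ R_{n,σ⊕1}`
with `2^(n+1)` points, indexed by `Bool × (Fin n → Bool)`. -/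
noncomputable def hammersleySym (n : ℕ) (σ : Fin n → Bool) :
    Bool × (Fin n → Bool) → ℝ × ℝ :=
  fun bt => if bt.1 then hammersleyShifted n (fun i => !(σ i)) bt.2
            else hammersleyShifted n σ bt.2

/-- The multiset `R_{n,σ} ∪ {(x, 1-y) : (x,y) ∈ R_{n,σ}}` with `2^(n+1)` points
(counted with multiplicity), indexed by `Bool × (Fin n → Bool)`. -/
noncomputable def hammersleySymTilde (n : ℕ) (σ : Fin n → Bool) :
    Bool × (Fin n → Bool) → ℝ × ℝ :=
  fun bt => if bt.1 then ((hammersleyShifted n σ bt.2).1, 1 - (hammersleyShifted n σ bt.2).2)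
            else hammersleyShifted n σ bt.2

lemma bval_nonneg' (b : Bool) : 0 ≤ bval b := by cases b <;> simp [bval]

lemma Y_inj (n : ℕ) : ∀ (a b : Fin n → Bool),
    |(∑ i : Fin n, bval (a i) / 2 ^ (i.val + 1)) - ∑ i : Fin n, bval (b i) / 2 ^ (i.val + 1)|
      < 1 / 2 ^ n → a = b := by
  induction n with
  | zero => intro a b _; exact Subsingleton.elim _ _
  | succ n ih =>
    intro a b h
    rw [Fin.sum_univ_castSucc, Fin.sum_univ_castSucc] at h
    simp only [Fin.val_castSucc, Fin.val_last] at h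
    have hp : (0 : ℝ) < 1 / 2 ^ (n + 1) := by positivity
    have h2 : (1 : ℝ) / 2 ^ n = 1 / 2 ^ (n + 1) + 1 / 2 ^ (n + 1) := by
      rw [pow_succ]; field_simp; norm_num
    have key := ih (fun i => a i.castSucc) (fun i => b i.castSucc) (by
      rw [h2]
      rw [abs_lt] at h ⊢
      generalize a (Fin.last n) = u at h
      generalize b (Fin.last n) = v at h
      cases u <;> cases v <;> simp only [bval, if_true, if_false, Bool.false_eq_true, zero_div] at h ⊢ <;>
        constructor <;> linarith [h.1, h.2])
    have hl : a (Fin.last n) = b (Fin.last n) := by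
      have e : ∀ i : Fin n, a i.castSucc = b i.castSucc := fun i => congrFun key i
      simp only [e] at h
      rw [abs_lt] at h
      generalize a (Fin.last n) = u at h ⊢
      generalize b (Fin.last n) = v at h ⊢
      cases u <;> cases v <;> simp only [bval, if_true, if_false, Bool.false_eq_true, zero_div] at h ⊢ <;>
        linarith [h.1, h.2]
    funext i
    refine Fin.lastCases hl (fun j => congrFun key j) i

lemma geom_half (n : ℕ) : ∑ i : Fin n, (1 : ℝ) / 2 ^ (i.val + 1) = 1 - 1 / 2 ^ n := by
  induction n with
  | zero => simp
  | succ n ih =>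
    rw [Fin.sum_univ_castSucc]
    simp only [Fin.val_castSucc, Fin.val_last, ih]
    rw [pow_succ]; field_simp; ring

lemma shifted_compl (n : ℕ) (σ t : Fin n → Bool) :
    1 - (hammersleyShifted n σ t).2
      = (hammersleyShifted n (fun i => !(σ i)) t).2 + 1 / 2 ^ n := by
  have h : (hammersleyShifted n σ t).2 + (hammersleyShifted n (fun i => !(σ i)) t).2
      = 1 - 1 / 2 ^ n := by
    rw [← geom_half]
    simp only [hammersleyShifted]
    rw [← Finset.sum_add_distrib]
    refine Finset.sum_congr rfl fun i _ => ?_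
    rw [← add_div]
    congr 1
    cases t i <;> cases σ i <;> simp [bval]
  linarith

lemma shifted_nonneg (n : ℕ) (σ t : Fin n → Bool) : 0 ≤ (hammersleyShifted n σ t).2 := by
  simp only [hammersleyShifted]
  exact Finset.sum_nonneg fun i _ => div_nonneg (bval_nonneg' _) (by positivity)

/-- Counting functions of the symmetrized point set and of the multiset
`~R_{n,σ}^{sym}` differ by at most one. -/
theorem statement16 (n : ℕ) (hn : 0 < n) (σ : Fin n → Bool)
    (t : ℝ × ℝ) (ht : t ∈ Set.Icc (0 : ℝ × ℝ) 1) :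
    countIn (hammersleySymTilde n σ) t ≤ countIn (hammersleySym n σ) t ∧
    countIn (hammersleySym n σ) t ≤ countIn (hammersleySymTilde n σ) t + 1 := by
  have hp : (0 : ℝ) < 1 / 2 ^ n := by positivity
  unfold countIn
  constructor
  · apply Finset.card_le_card
    rintro ⟨b, s⟩ h
    simp only [Finset.mem_filter, Finset.mem_univ, true_and] at h ⊢
    cases b
    · simpa [hammersleySym, hammersleySymTilde] using h
    · simp only [hammersleySym, hammersleySymTilde, if_true, shifted_compl] at h ⊢
      obtain ⟨h1, h2, h3, h4⟩ := h
      exact ⟨h1, h2, shifted_nonneg _ _ _, by linarith⟩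
  · rw [add_comm]
    refine le_trans (Finset.card_le_card_sdiff_add_card (t := Finset.univ.filter (fun k =>
        0 ≤ (hammersleySymTilde n σ k).1 ∧
        (hammersleySymTilde n σ k).1 < t.1 ∧ 0 ≤ (hammersleySymTilde n σ k).2 ∧
        (hammersleySymTilde n σ k).2 < t.2))) ?_
    refine Nat.add_le_add_right ?_ _
    rw [Finset.card_le_one]
    have aux : ∀ b s, (b, s) ∈ (Finset.univ.filter (fun k => 0 ≤ (hammersleySym n σ k).1 ∧
        (hammersleySym n σ k).1 < t.1 ∧ 0 ≤ (hammersleySym n σ k).2 ∧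
        (hammersleySym n σ k).2 < t.2)) \ (Finset.univ.filter (fun k =>
        0 ≤ (hammersleySymTilde n σ k).1 ∧
        (hammersleySymTilde n σ k).1 < t.1 ∧ 0 ≤ (hammersleySymTilde n σ k).2 ∧
        (hammersleySymTilde n σ k).2 < t.2)) → b = true ∧
        (hammersleyShifted n (fun i => !(σ i)) s).2 < t.2 ∧
        t.2 ≤ (hammersleyShifted n (fun i => !(σ i)) s).2 + 1 / 2 ^ n := by
      intro b s h
      simp only [Finset.mem_sdiff, Finset.mem_filter, Finset.mem_univ, true_and] at h
      cases b
      · exact absurd (by simpa [hammersleySym, hammersleySymTilde] using h.1) h.2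
      · simp only [hammersleySym, hammersleySymTilde, if_true, shifted_compl] at h
        obtain ⟨⟨h1, h2, h3, h4⟩, h5⟩ := h
        refine ⟨rfl, h4, ?_⟩
        by_contra hc
        exact h5 ⟨h1, h2, by linarith, not_le.mp hc⟩
    rintro ⟨b, s⟩ h ⟨b', s'⟩ h'
    obtain ⟨e, h1, h2⟩ := aux b s h
    obtain ⟨e', h1', h2'⟩ := aux b' s' h'
    have := Y_inj n (fun i => s i != !(σ i)) (fun i => s' i != !(σ i)) (by
      simp only [hammersleyShifted] at h1 h2 h1' h2'
      rw [abs_lt]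
      constructor <;> linarith)
    rw [e, e']
    congr 1
    funext i
    have hi := congrFun this i
    revert hi
    cases s i <;> cases s' i <;> cases σ i <;> simp
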